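/- Let (h_n, u_n, f_n) be a contradiction sequence and let χ ∈ C_c^∞(ℝ) with χ(z) = 1 for |z| ≤ 1 and χ(z) = 0 for |z| ≥ 2. Set v_n := χ(a/h_n)·u_n. Then ‖a^{1/2}·v_n‖_{L²} + ‖a^{1/2}·h_n∇v_n‖_{L²} = o(h_n) as n → ∞. -/

import Mathlib

open MeasureTheory Complex ComplexConjugate

noncomputable section

/-- Partial derivative `∂u/∂xᵢ` of a complex-valued function on `ℝ^d`. -/
def pd {d : ℕ} (i : Fin d) (u : EuclideanSpace ℝ (Fin d) → ℂ)
    (x : EuclideanSpace ℝ (Fin d)) : ℂ :=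
  fderiv ℝ u x (EuclideanSpace.single i (1 : ℝ))

/-- Laplacian `Δu = ∑ᵢ ∂²u/∂xᵢ²` of a complex-valued function on `ℝ^d`. -/
def lap {d : ℕ} (u : EuclideanSpace ℝ (Fin d) → ℂ)
    (x : EuclideanSpace ℝ (Fin d)) : ℂ :=
  ∑ i : Fin d, pd i (pd i u) x

/-- The semiclassical Kelvin–Voigt operator
`P_h u = -h²Δu - u - i h (∇a·∇u + a Δu)`. -/
def Ph {d : ℕ} (h : ℝ) (a : EuclideanSpace ℝ (Fin d) → ℝ)
    (u : EuclideanSpace ℝ (Fin d) → ℂ) (x : EuclideanSpace ℝ (Fin d)) : ℂ :=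
  -(h ^ 2 : ℂ) * lap u x - u x -
    Complex.I * (h : ℂ) *
      ((∑ i : Fin d, (fderiv ℝ a x (EuclideanSpace.single i (1 : ℝ)) : ℂ) * pd i u x) +
        (a x : ℂ) * lap u x)

open Filter Asymptotics

section

variable {d : ℕ}

local notation "E" => EuclideanSpace ℝ (Fin d)

theorem sum_sq_fderiv_single (a : E → ℝ) (x : E) :
    ∑ i : Fin d, (fderiv ℝ a x (EuclideanSpace.single i (1 : ℝ))) ^ 2 = ‖gradient a x‖ ^ 2 := by
  rw [EuclideanSpace.norm_sq_eq]
  refine Finset.sum_congr rfl fun i _ => ?_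
  have : fderiv ℝ a x (EuclideanSpace.single i (1 : ℝ)) = gradient a x i := by
    rw [← inner_gradient_left (𝕜 := ℝ), EuclideanSpace.inner_single_right]
    simp
  rw [this, Real.norm_eq_abs, sq_abs]

theorem integrable_of_forall_notMem_tsupport {F G : Type*} [Zero G] [NormedAddCommGroup F]
    {u : E → G} (hu : HasCompactSupport u) {φ : E → F} (hφ : Continuous φ)
    (h0 : ∀ x, x ∉ tsupport u → φ x = 0) : Integrable φ :=
  hφ.integrable_of_hasCompactSupport (HasCompactSupport.intro hu fun x hx => h0 x hx)

theorem pd_eq_zero_of_notMem_tsupport {u : E → ℂ} {x : E} (hx : x ∉ tsupport u) (i : Fin d) :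
    pd i u x = 0 := by
  simp [pd, fderiv_of_notMem_tsupport ℝ hx]

theorem contDiff_pd {u : E → ℂ} (hu : ContDiff ℝ (⊤ : ℕ∞) u) (i : Fin d) :
    ContDiff ℝ (⊤ : ℕ∞) (pd i u) :=
  (hu.fderiv_right (m := (⊤ : ℕ∞)) le_rfl).clm_apply contDiff_const

theorem continuous_lap {u : E → ℂ} (hu : ContDiff ℝ (⊤ : ℕ∞) u) : Continuous (lap u) :=
  continuous_finsetSum _ fun i _ => (contDiff_pd (contDiff_pd hu i) i).continuous

theorem continuous_fderiv_single {a : E → ℝ} (ha : ContDiff ℝ 1 a) (i : Fin d) :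
    Continuous fun x => fderiv ℝ a x (EuclideanSpace.single i (1 : ℝ)) :=
  (ha.continuous_fderiv one_ne_zero).clm_apply continuous_const

theorem continuous_Ph {a : E → ℝ} (ha : ContDiff ℝ 1 a) {u : E → ℂ}
    (hu : ContDiff ℝ (⊤ : ℕ∞) u) (h : ℝ) : Continuous (Ph h a u) := by
  have h1 := continuous_lap hu
  have h2 := fun i => (contDiff_pd hu i).continuous
  have h3 := continuous_fderiv_single ha
  have h4 := hu.continuous
  have h5 := ha.continuous
  unfold Ph
  fun_prop

theorem Ph_eq_zero_of_notMem_tsupport {a : E → ℝ} {u : E → ℂ} {x : E} (hx : x ∉ tsupport u)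
    (h : ℝ) : Ph h a u x = 0 := by
  have h2 : ∀ i, pd i (pd i u) x = 0 := fun i =>
    pd_eq_zero_of_notMem_tsupport
      (fun hx' => hx (tsupport_fderiv_apply_subset ℝ (EuclideanSpace.single i 1) hx')) i
  simp [Ph, lap, h2, pd_eq_zero_of_notMem_tsupport hx, image_eq_zero_of_notMem_tsupport hx]

theorem integral_fderiv_apply_eq_zero {f : E → ℂ} (hf : ContDiff ℝ 1 f)
    (hs : HasCompactSupport f) (v : E) : ∫ x, fderiv ℝ f x v = 0 := by
  have hc : Continuous fun x => fderiv ℝ f x v :=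
    (hf.continuous_fderiv one_ne_zero).clm_apply continuous_const
  have := integral_mul_fderiv_eq_neg_fderiv_mul_of_integrable (μ := volume) (𝕜 := ℂ)
    (f := fun _ : E => (1 : ℂ)) (g := f) (v := v) (by simp)
    (by simpa using hc.integrable_of_hasCompactSupport (hs.fderiv_apply ℝ v))
    (by simpa using hf.continuous.integrable_of_hasCompactSupport hs)
    (fun x _ => differentiableAt_const _)
    (fun x _ => (hf.differentiable one_ne_zero).differentiableAt)
  simpa using this

theorem integral_mul_le_sqrt_mul_sqrt {p q : E → ℝ} (hp : Continuous p) (hq : Continuous q)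
    (hps : HasCompactSupport p) (hqs : HasCompactSupport q) (hp0 : ∀ x, 0 ≤ p x)
    (hq0 : ∀ x, 0 ≤ q x) :
    ∫ x, p x * q x ≤ √(∫ x, p x ^ 2) * √(∫ x, q x ^ 2) := by
  have := integral_mul_le_Lp_mul_Lq_of_nonneg (μ := volume) Real.HolderConjugate.two_two
    (.of_forall hp0) (.of_forall hq0) (hp.memLp_of_hasCompactSupport hps)
    (hq.memLp_of_hasCompactSupport hqs)
  simpa [Real.sqrt_eq_rpow] using this

/-- The flux `(h² + i h a) ∂ᵢu · g ū` whose divergence appears when pairing `P_h u` with `g u`. -/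
def flux (h : ℝ) (a g : E → ℝ) (u : E → ℂ) (i : Fin d) (x : E) : ℂ :=
  ((h ^ 2 : ℂ) + I * h * a x) * pd i u x * (g x * conj (u x))

theorem fderiv_flux {a g : E → ℝ} (ha : ContDiff ℝ 1 a) (hg : ContDiff ℝ 1 g) {u : E → ℂ}
    (hu : ContDiff ℝ (⊤ : ℕ∞) u) (h : ℝ) (i : Fin d) (x : E) :
    fderiv ℝ (flux h a g u i) x (EuclideanSpace.single i (1 : ℝ)) =
      (((h ^ 2 : ℂ) + I * h * a x) * pd i (pd i u) x +
        I * h * (fderiv ℝ a x (EuclideanSpace.single i (1 : ℝ)) : ℂ) * pd i u x) *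
          (g x * conj (u x)) +
      ((h ^ 2 : ℂ) + I * h * a x) * (g x * ‖pd i u x‖ ^ 2 +
        conj (u x) * ((fderiv ℝ g x (EuclideanSpace.single i (1 : ℝ)) : ℂ) * pd i u x)) := by
  have hof : ∀ {b : E → ℝ}, ContDiff ℝ 1 b →
      HasFDerivAt (fun y => (b y : ℂ)) (ofRealCLM.comp (fderiv ℝ b x)) x := fun hb =>
    ofRealCLM.hasFDerivAt.comp x (hb.differentiable one_ne_zero x).hasFDerivAt
  have hua := (hu.differentiable (by simp) x).hasFDerivAt
  have hpa := ((contDiff_pd hu i).differentiable (by simp) x).hasFDerivAt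
  have hc : HasFDerivAt (fun y => conj (u y))
      ((conjCLE : ℂ →L[ℝ] ℂ).comp (fderiv ℝ u x)) x :=
    (conjCLE : ℂ →L[ℝ] ℂ).hasFDerivAt.comp x hua
  have := (((((hof ha).const_mul (I * h)).const_add ((h : ℂ) ^ 2)).mul hpa).mul
    ((hof hg).mul hc)).fderiv
  have hn : ((‖pd i u x‖ : ℂ)) ^ 2 = pd i u x * conj (pd i u x) := by
    rw [mul_conj, normSq_eq_norm_sq]; push_cast; rfl
  rw [hn]
  unfold flux
  erw [this]
  simp [pd]
  ring

theorem contDiff_flux {a g : E → ℝ} (ha : ContDiff ℝ 1 a) (hg : ContDiff ℝ 1 g) {u : E → ℂ}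
    (hu : ContDiff ℝ (⊤ : ℕ∞) u) (h : ℝ) (i : Fin d) : ContDiff ℝ 1 (flux h a g u i) := by
  have h1 : ContDiff ℝ 1 fun x => (a x : ℂ) := ofRealCLM.contDiff.comp ha
  have h2 : ContDiff ℝ 1 fun x => (g x : ℂ) := ofRealCLM.contDiff.comp hg
  have h3 : ContDiff ℝ 1 fun x => conj (u x) :=
    (conjCLE : ℂ →L[ℝ] ℂ).contDiff.comp (hu.of_le (by simp))
  have h4 : ContDiff ℝ 1 (pd i u) := (contDiff_pd hu i).of_le (by simp)
  unfold flux
  fun_prop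

/-- The pointwise defect between `P_h u · g ū` and its energy density; it is a divergence. -/
def energyDefect (h : ℝ) (a g : E → ℝ) (u : E → ℂ) (x : E) : ℂ :=
  Ph h a u x * (g x * conj (u x)) -
    ((h ^ 2 : ℂ) + I * h * a x) * (g x * ∑ i : Fin d, (‖pd i u x‖ : ℂ) ^ 2 +
      (∑ i : Fin d, (fderiv ℝ g x (EuclideanSpace.single i (1 : ℝ)) : ℂ) * pd i u x) *
        conj (u x)) + g x * (‖u x‖ : ℂ) ^ 2

theorem integral_energyDefect {a g : E → ℝ} (ha : ContDiff ℝ 1 a) (hg : ContDiff ℝ 1 g)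
    {u : E → ℂ} (hu : ContDiff ℝ (⊤ : ℕ∞) u) (hs : HasCompactSupport u) (h : ℝ) :
    Integrable (energyDefect h a g u) ∧ ∫ x, energyDefect h a g u x = 0 := by
  have hsf : ∀ i, HasCompactSupport (flux h a g u i) := fun i =>
    HasCompactSupport.intro hs fun x hx => by
      simp [flux, image_eq_zero_of_notMem_tsupport hx]
  have hz := fun i => integral_fderiv_apply_eq_zero (contDiff_flux ha hg hu h i) (hsf i)
    (EuclideanSpace.single i (1 : ℝ))
  have hint : ∀ i : Fin d, Integrable fun x =>
      fderiv ℝ (flux h a g u i) x (EuclideanSpace.single i (1 : ℝ)) := fun i =>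
    ((contDiff_flux ha hg hu h i).continuous_fderiv one_ne_zero |>.clm_apply
      continuous_const).integrable_of_hasCompactSupport ((hsf i).fderiv_apply ℝ _)
  have key : energyDefect h a g u = fun x => -∑ i : Fin d,
      fderiv ℝ (flux h a g u i) x (EuclideanSpace.single i (1 : ℝ)) := by
    ext x
    have hn : ((‖u x‖ : ℂ)) ^ 2 = u x * conj (u x) := by
      rw [mul_conj, normSq_eq_norm_sq]; push_cast; rfl
    simp only [fderiv_flux ha hg hu, Finset.sum_add_distrib, ← Finset.mul_sum, ← Finset.sum_mul,
      hn, energyDefect, Ph, lap, mul_assoc]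
    ring
  rw [key]
  refine ⟨(integrable_finsetSum _ fun i _ => hint i).neg, ?_⟩
  rw [integral_neg, integral_finsetSum _ fun i _ => hint i]
  simp [hz]

/-- The squared length `‖∇u‖²` of the gradient. -/
def gradSq (u : E → ℂ) (x : E) : ℝ := ∑ i : Fin d, ‖pd i u x‖ ^ 2

theorem gradSq_nonneg (u : E → ℂ) (x : E) : 0 ≤ gradSq u x :=
  Finset.sum_nonneg fun _ _ => by positivity

theorem gradSq_eq_zero_of_notMem_tsupport {u : E → ℂ} {x : E} (hx : x ∉ tsupport u) :
    gradSq u x = 0 := by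
  simp [gradSq, pd_eq_zero_of_notMem_tsupport hx]

theorem continuous_gradSq {u : E → ℂ} (hu : ContDiff ℝ (⊤ : ℕ∞) u) : Continuous (gradSq u) :=
  continuous_finsetSum _ fun i _ => (contDiff_pd hu i).continuous.norm.pow 2

/-- Energy estimate: the imaginary part of `⟨P_h u, u⟩` controls `∫ a ‖∇u‖²`. -/
theorem mul_integral_mul_gradSq_le {a : E → ℝ} (ha : ContDiff ℝ 1 a)
    {u : E → ℂ} (hu : ContDiff ℝ (⊤ : ℕ∞) u) (hs : HasCompactSupport u) (h : ℝ) :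
    h * ∫ x, a x * gradSq u x ≤ √(∫ x, ‖Ph h a u x‖ ^ 2) * √(∫ x, ‖u x‖ ^ 2) := by
  obtain ⟨hi, h0⟩ := integral_energyDefect ha (contDiff_const (c := (1 : ℝ))) hu hs h
  have hP := continuous_Ph ha hu h
  have hD := continuous_gradSq hu
  have ha' := ha.continuous
  have hu' := hu.continuous
  have i1 : Integrable fun x => ‖Ph h a u x‖ * ‖u x‖ :=
    integrable_of_forall_notMem_tsupport hs (by fun_prop) fun x hx => by
      simp [image_eq_zero_of_notMem_tsupport hx]
  have i2 : Integrable fun x => a x * gradSq u x :=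
    integrable_of_forall_notMem_tsupport hs (by fun_prop) fun x hx => by
      simp [gradSq_eq_zero_of_notMem_tsupport hx]
  have him : ∫ x, (energyDefect h a (fun _ => 1) u x).im = 0 := by
    have := integral_im hi
    simpa [h0] using this
  have hle : ∫ x, (energyDefect h a (fun _ => 1) u x).im ≤
      ∫ x, (‖Ph h a u x‖ * ‖u x‖ - h * (a x * gradSq u x)) := by
    refine integral_mono hi.im (i1.sub (i2.const_mul h)) fun x => ?_
    have h1 : (energyDefect h a (fun _ => 1) u x).im =
        (Ph h a u x * conj (u x)).im - h * (a x * gradSq u x) := by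
      have : (∑ i : Fin d, (‖pd i u x‖ : ℂ) ^ 2) = ((gradSq u x : ℝ) : ℂ) := by
        simp [gradSq]
      have e : energyDefect h a (fun _ => 1) u x = Ph h a u x * conj (u x) -
          (((h ^ 2 * gradSq u x - ‖u x‖ ^ 2 : ℝ) : ℂ) +
            ((h * (a x * gradSq u x) : ℝ) : ℂ) * I) := by
        simp only [energyDefect, this]
        simp
        ring
      rw [e, sub_im, add_im, ofReal_im, im_ofReal_mul, I_im]
      ring
    have h2 : (Ph h a u x * conj (u x)).im ≤ ‖Ph h a u x‖ * ‖u x‖ := by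
      refine (im_le_norm _).trans (le_of_eq ?_)
      simp
    change (energyDefect h a (fun _ => 1) u x).im ≤ _
    rw [h1]
    linarith
  rw [him, integral_sub i1 (i2.const_mul h), integral_const_mul] at hle
  have hcs := integral_mul_le_sqrt_mul_sqrt hP.norm hu'.norm
    (HasCompactSupport.intro hs fun x hx => by
      simp [Ph_eq_zero_of_notMem_tsupport hx]) hs.norm
    (fun x => norm_nonneg _) fun x => norm_nonneg _
  linarith

/-- Testing `P_h u` against `a u` controls `∫ a ‖u‖²`. -/
theorem integral_mul_norm_sq_le {a : E → ℝ} (ha : ContDiff ℝ 1 a) (hapos : ∀ x, 0 ≤ a x)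
    {C K : ℝ} (hC : ∀ x, a x ≤ C) (haK : ∀ x, ‖gradient a x‖ ≤ K * √(a x))
    {u : E → ℂ} (hu : ContDiff ℝ (⊤ : ℕ∞) u) (hs : HasCompactSupport u) {h : ℝ} (hh : 0 < h) :
    ∫ x, a x * ‖u x‖ ^ 2 ≤ 2 * (C * ∫ x, ‖Ph h a u x‖ ^ 2) +
      2 * (h ^ 2 * (1 + K ^ 2 * C) * ∫ x, a x * gradSq u x) +
      2 * (h ^ 2 * |K| * (√(∫ x, a x * gradSq u x) * √(∫ x, ‖u x‖ ^ 2))) := by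
  obtain ⟨hi, h0⟩ := integral_energyDefect ha ha hu hs h
  have hP := continuous_Ph ha hu h
  have hD := continuous_gradSq hu
  have ha' := ha.continuous
  have hu' := hu.continuous
  have i1 : Integrable fun x => ‖Ph h a u x‖ ^ 2 :=
    integrable_of_forall_notMem_tsupport hs (by fun_prop) fun x hx => by
      simp [Ph_eq_zero_of_notMem_tsupport hx]
  have i2 : Integrable fun x => a x * gradSq u x :=
    integrable_of_forall_notMem_tsupport hs (by fun_prop) fun x hx => by
      simp [gradSq_eq_zero_of_notMem_tsupport hx]
  have i3 : Integrable fun x => √(a x * gradSq u x) * ‖u x‖ :=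
    integrable_of_forall_notMem_tsupport hs (by fun_prop) fun x hx => by
      simp [image_eq_zero_of_notMem_tsupport hx]
  have i4 : Integrable fun x => a x * ‖u x‖ ^ 2 :=
    integrable_of_forall_notMem_tsupport hs (by fun_prop) fun x hx => by
      simp [image_eq_zero_of_notMem_tsupport hx]
  have hre : ∫ x, (energyDefect h a a u x).re = 0 := by
    have := integral_re hi
    simpa [h0] using this
  have hle : ∫ x, (1 / 2 * (a x * ‖u x‖ ^ 2) - (C * ‖Ph h a u x‖ ^ 2 +
      h ^ 2 * (1 + K ^ 2 * C) * (a x * gradSq u x) +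
      h ^ 2 * |K| * (√(a x * gradSq u x) * ‖u x‖))) ≤ ∫ x, (energyDefect h a a u x).re := by
    refine integral_mono ((i4.const_mul _).sub (((i1.const_mul _).add (i2.const_mul _)).add
      (i3.const_mul _))) hi.re fun x => ?_
    change _ ≤ (energyDefect h a a u x).re
    set S : ℂ := ∑ i : Fin d,
      (fderiv ℝ a x (EuclideanSpace.single i (1 : ℝ)) : ℂ) * pd i u x with hS
    have hDx := gradSq_nonneg u x
    have hSle : ‖S‖ ≤ |K| * √(a x * gradSq u x) := by
      calc ‖S‖ ≤ ∑ i : Fin d,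
            |fderiv ℝ a x (EuclideanSpace.single i (1 : ℝ))| * ‖pd i u x‖ := by
            refine (norm_sum_le _ _).trans (le_of_eq ?_)
            simp
        _ ≤ √(‖gradient a x‖ ^ 2) * √(gradSq u x) := by
            refine (Real.sum_mul_le_sqrt_mul_sqrt _ _ _).trans (le_of_eq ?_)
            simp only [sq_abs, sum_sq_fderiv_single, gradSq]
        _ ≤ (|K| * √(a x)) * √(gradSq u x) := by
            rw [Real.sqrt_sq (norm_nonneg _)]
            gcongr
            exact (haK x).trans (by gcongr; exact le_abs_self K)
        _ = _ := by rw [Real.sqrt_mul (hapos x), mul_assoc]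
    have e : energyDefect h a a u x = Ph h a u x * (a x * conj (u x)) -
        (((h ^ 2 * (a x * gradSq u x) - a x * ‖u x‖ ^ 2 : ℝ) : ℂ) +
          ((h * a x * (a x * gradSq u x) : ℝ) : ℂ) * I) -
        ((h ^ 2 : ℂ) + I * h * a x) * (S * conj (u x)) := by
      have : (∑ i : Fin d, (‖pd i u x‖ : ℂ) ^ 2) = ((gradSq u x : ℝ) : ℂ) := by
        simp [gradSq]
      simp only [energyDefect, this, ← hS]
      push_cast
      ring
    have e1 : -(‖Ph h a u x‖ * (a x * ‖u x‖)) ≤ (Ph h a u x * (a x * conj (u x))).re := by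
      refine le_trans (le_of_eq ?_) (neg_le_of_abs_le (abs_re_le_norm _))
      simp [abs_of_nonneg (hapos x)]
    have e2 : (((h ^ 2 : ℂ) + I * h * a x) * (S * conj (u x))).re ≤
        (h ^ 2 + h * a x) * (|K| * √(a x * gradSq u x) * ‖u x‖) := by
      have hc : ‖(h ^ 2 : ℂ) + I * h * a x‖ ≤ h ^ 2 + h * a x := by
        refine (norm_add_le _ _).trans (le_of_eq ?_)
        simp [abs_of_nonneg (hapos x), abs_of_pos hh]
      refine (re_le_norm _).trans ?_
      rw [norm_mul, norm_mul, norm_conj]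
      exact mul_le_mul hc (mul_le_mul_of_nonneg_right hSle (norm_nonneg _)) (by positivity)
        ((norm_nonneg _).trans hc)
    rw [e, sub_re, sub_re, add_re, ofReal_re, re_ofReal_mul, I_re]
    have hs2 : √(a x * gradSq u x) ^ 2 = a x * gradSq u x :=
      Real.sq_sqrt (mul_nonneg (hapos x) hDx)
    set s := √(a x * gradSq u x)
    have y1 : ‖Ph h a u x‖ * (a x * ‖u x‖) ≤ 1 / 4 * (a x * ‖u x‖ ^ 2) +
        C * ‖Ph h a u x‖ ^ 2 := by
      nlinarith [mul_nonneg (hapos x) (sq_nonneg (‖u x‖ / 2 - ‖Ph h a u x‖)),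
        mul_nonneg (sub_nonneg.2 (hC x)) (sq_nonneg ‖Ph h a u x‖)]
    have y2 : h * a x * (|K| * s * ‖u x‖) ≤ 1 / 4 * (a x * ‖u x‖ ^ 2) +
        h ^ 2 * (K ^ 2 * C) * s ^ 2 := by
      have := sq_abs K
      rw [← this]
      nlinarith [mul_nonneg (hapos x) (sq_nonneg (‖u x‖ / 2 - h * |K| * s)),
        mul_nonneg (sub_nonneg.2 (hC x)) (sq_nonneg (h * |K| * s))]
    rw [hs2] at y2
    nlinarith
  have hcs := integral_mul_le_sqrt_mul_sqrt (p := fun x => √(a x * gradSq u x))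
    (q := fun x => ‖u x‖) (by fun_prop) (by fun_prop)
    (HasCompactSupport.intro hs fun x hx => by
      simp [gradSq_eq_zero_of_notMem_tsupport hx]) hs.norm
    (fun x => Real.sqrt_nonneg _) fun x => norm_nonneg _
  simp only [fun x => Real.sq_sqrt (mul_nonneg (hapos x) (gradSq_nonneg u x))] at hcs
  rw [hre, integral_sub (by fun_prop) (by fun_prop), integral_add (by fun_prop) (by fun_prop),
    integral_add (by fun_prop) (by fun_prop)] at hle
  simp only [integral_const_mul] at hle
  have := mul_le_mul_of_nonneg_left hcs (by positivity : 0 ≤ h ^ 2 * |K|)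
  linarith

/-- The gradient of the truncation `χ(a/h) u`, weighted by `a`. -/
theorem mul_sum_norm_pd_truncation_le {a : E → ℝ} (ha : ContDiff ℝ 1 a) (hapos : ∀ x, 0 ≤ a x)
    {C K : ℝ} (hC : ∀ x, a x ≤ C) (haK : ∀ x, ‖gradient a x‖ ≤ K * √(a x))
    {u : E → ℂ} (hu : ContDiff ℝ (⊤ : ℕ∞) u) {h : ℝ} (hh : 0 < h) {χ : ℝ → ℝ}
    (hχ : ContDiff ℝ (⊤ : ℕ∞) χ) {B B' : ℝ} (hB : ∀ z, |χ z| ≤ B) (hB' : ∀ z, |deriv χ z| ≤ B')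
    (x : E) :
    a x * ∑ i : Fin d,
      ‖(h : ℂ) * pd i (fun y => ((χ (a y / h) : ℝ) : ℂ) * u y) x‖ ^ 2 ≤
    2 * B ^ 2 * h ^ 2 * (a x * gradSq u x) + 2 * B' ^ 2 * K ^ 2 * C * (a x * ‖u x‖ ^ 2) := by
  have hpd : ∀ i : Fin d, (h : ℂ) * pd i (fun y => ((χ (a y / h) : ℝ) : ℂ) * u y) x =
      (h * χ (a x / h) : ℝ) * pd i u x +
      (deriv χ (a x / h) * fderiv ℝ a x (EuclideanSpace.single i (1 : ℝ)) : ℝ) * u x := by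
    intro i
    have h1 : HasFDerivAt (fun y => a y / h) (h⁻¹ • fderiv ℝ a x) x := by
      simpa [div_eq_mul_inv] using
        (ha.differentiable one_ne_zero x).hasFDerivAt.mul_const h⁻¹
    have h2 := ((hχ.differentiable (by simp) (a x / h)).hasDerivAt.comp_hasFDerivAt x h1)
    have h3 := ofRealCLM.hasFDerivAt.comp x h2
    have h4 := (h3.mul (hu.differentiable (by simp) x).hasFDerivAt).fderiv
    have hh' : (h : ℂ) ≠ 0 := by exact_mod_cast hh.ne'
    unfold pd
    erw [h4]
    simp
    field_simp
  have hterm : ∀ i : Fin d,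
      ‖(h : ℂ) * pd i (fun y => ((χ (a y / h) : ℝ) : ℂ) * u y) x‖ ^ 2 ≤
      2 * B ^ 2 * h ^ 2 * ‖pd i u x‖ ^ 2 + 2 * B' ^ 2 *
        fderiv ℝ a x (EuclideanSpace.single i (1 : ℝ)) ^ 2 * ‖u x‖ ^ 2 := by
    intro i
    rw [hpd]
    set t := fderiv ℝ a x (EuclideanSpace.single i (1 : ℝ))
    have n1 : ‖((h * χ (a x / h) : ℝ) : ℂ) * pd i u x‖ ≤ B * h * ‖pd i u x‖ := by
      rw [norm_mul, norm_real, Real.norm_eq_abs, abs_mul, abs_of_pos hh, mul_comm h]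
      gcongr
      exact hB _
    have n2 : ‖((deriv χ (a x / h) * t : ℝ) : ℂ) * u x‖ ≤ B' * |t| * ‖u x‖ := by
      rw [norm_mul, norm_real, Real.norm_eq_abs, abs_mul]
      gcongr
      exact hB' _
    calc _ ≤ (B * h * ‖pd i u x‖ + B' * |t| * ‖u x‖) ^ 2 := by
          gcongr
          exact (norm_add_le _ _).trans (add_le_add n1 n2)
      _ ≤ 2 * ((B * h * ‖pd i u x‖) ^ 2 + (B' * |t| * ‖u x‖) ^ 2) := add_sq_le
      _ = _ := by rw [mul_pow, mul_pow, mul_pow, mul_pow, sq_abs]; ring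
  have hgrad : ∑ i : Fin d, (fderiv ℝ a x (EuclideanSpace.single i (1 : ℝ))) ^ 2 ≤
      K ^ 2 * a x := by
    have := pow_le_pow_left₀ (norm_nonneg _) (haK x) 2
    rwa [mul_pow, Real.sq_sqrt (hapos x), ← sum_sq_fderiv_single] at this
  calc _ ≤ a x * ∑ i : Fin d, (2 * B ^ 2 * h ^ 2 * ‖pd i u x‖ ^ 2 + 2 * B' ^ 2 *
        fderiv ℝ a x (EuclideanSpace.single i (1 : ℝ)) ^ 2 * ‖u x‖ ^ 2) :=
        mul_le_mul_of_nonneg_left (Finset.sum_le_sum fun i _ => hterm i) (hapos x)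
    _ = 2 * B ^ 2 * h ^ 2 * (a x * gradSq u x) + 2 * B' ^ 2 *
        (∑ i : Fin d, fderiv ℝ a x (EuclideanSpace.single i (1 : ℝ)) ^ 2) *
          (a x * ‖u x‖ ^ 2) := by
        rw [Finset.sum_add_distrib, ← Finset.mul_sum, ← Finset.sum_mul, ← Finset.mul_sum, gradSq]
        ring
    _ ≤ 2 * B ^ 2 * h ^ 2 * (a x * gradSq u x) + 2 * B' ^ 2 * (K ^ 2 * C) *
          (a x * ‖u x‖ ^ 2) := by
        have := hapos x
        gcongr
        exact hgrad.trans (by gcongr; exact hC x)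
    _ = _ := by ring

/-- Modulus bounding `h⁻² ∫ a ‖u‖²` in terms of `r = ‖P_h u‖ / h`. -/
def massModulus (C K r : ℝ) : ℝ := 2 * (C * r ^ 2 + (1 + K ^ 2 * C) * r + |K| * √r)

/-- Modulus bounding the weighted norms of the truncation in terms of `r = ‖P_h u‖ / h`. -/
def truncationModulus (B B' C K r : ℝ) : ℝ :=
  √(B ^ 2 * massModulus C K r) +
    √(2 * B ^ 2 * r + 2 * B' ^ 2 * K ^ 2 * C * massModulus C K r)

theorem truncation_norms_le {a : E → ℝ} (ha : ContDiff ℝ 1 a) (hapos : ∀ x, 0 ≤ a x)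
    {C K : ℝ} (hC : ∀ x, a x ≤ C) (haK : ∀ x, ‖gradient a x‖ ≤ K * √(a x))
    {u : E → ℂ} (hu : ContDiff ℝ (⊤ : ℕ∞) u) (hs : HasCompactSupport u)
    (hu1 : ∫ x, ‖u x‖ ^ 2 = 1) {h : ℝ} (hh : 0 < h) {χ : ℝ → ℝ}
    (hχ : ContDiff ℝ (⊤ : ℕ∞) χ) {B B' : ℝ} (hB : ∀ z, |χ z| ≤ B)
    (hB' : ∀ z, |deriv χ z| ≤ B') :
    √(∫ x, a x * ‖((χ (a x / h) : ℝ) : ℂ) * u x‖ ^ 2) +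
      √(∫ x, a x * ∑ i : Fin d,
          ‖(h : ℂ) * pd i (fun y => ((χ (a y / h) : ℝ) : ℂ) * u y) x‖ ^ 2) ≤
    h * truncationModulus B B' C K (√(∫ x, ‖Ph h a u x‖ ^ 2) / h) := by
  have hC0 : 0 ≤ C := (hapos 0).trans (hC 0)
  set F := √(∫ x, ‖Ph h a u x‖ ^ 2) with hF
  have hF2 : ∫ x, ‖Ph h a u x‖ ^ 2 = F ^ 2 := by
    rw [hF, Real.sq_sqrt (integral_nonneg fun x => by positivity)]
  set r := F / h with hr
  have hFr : F = h * r := by rw [hr]; field_simp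
  set G := ∫ x, a x * gradSq u x with hG
  have hGr : G ≤ r := by
    have := mul_integral_mul_gradSq_le ha hu hs h
    rw [hu1, Real.sqrt_one, mul_one, ← hF, ← hG, hFr] at this
    exact le_of_mul_le_mul_left this hh
  set X := ∫ x, a x * ‖u x‖ ^ 2 with hX
  have hXr : X ≤ h ^ 2 * massModulus C K r := by
    have := integral_mul_norm_sq_le ha hapos hC haK hu hs hh
    rw [hu1, Real.sqrt_one, mul_one, hF2, ← hG, ← hX, hFr] at this
    calc X ≤ _ := this
      _ ≤ 2 * (C * (h * r) ^ 2) + 2 * (h ^ 2 * (1 + K ^ 2 * C) * r) +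
          2 * (h ^ 2 * |K| * √r) := by gcongr
      _ = _ := by rw [massModulus]; ring
  have hD := continuous_gradSq hu
  have ha' := ha.continuous
  have hu' := hu.continuous
  have i2 : Integrable fun x => a x * gradSq u x :=
    integrable_of_forall_notMem_tsupport hs (by fun_prop) fun x hx => by
      simp [gradSq_eq_zero_of_notMem_tsupport hx]
  have i4 : Integrable fun x => a x * ‖u x‖ ^ 2 :=
    integrable_of_forall_notMem_tsupport hs (by fun_prop) fun x hx => by
      simp [image_eq_zero_of_notMem_tsupport hx]
  have t1 : ∫ x, a x * ‖((χ (a x / h) : ℝ) : ℂ) * u x‖ ^ 2 ≤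
      h ^ 2 * (B ^ 2 * massModulus C K r) := by
    calc _ ≤ ∫ x, B ^ 2 * (a x * ‖u x‖ ^ 2) := by
          refine integral_mono_of_nonneg (.of_forall fun x => ?_) (i4.const_mul _)
            (.of_forall fun x => ?_)
          · exact mul_nonneg (hapos x) (by positivity)
          · change a x * ‖((χ (a x / h) : ℝ) : ℂ) * u x‖ ^ 2 ≤ B ^ 2 * (a x * ‖u x‖ ^ 2)
            rw [norm_mul, norm_real, Real.norm_eq_abs, mul_pow, mul_left_comm]
            have := hapos x
            gcongr
            exact hB _
      _ = B ^ 2 * X := integral_const_mul _ _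
      _ ≤ B ^ 2 * (h ^ 2 * massModulus C K r) := by gcongr
      _ = _ := by ring
  have t2 : ∫ x, a x * ∑ i : Fin d,
      ‖(h : ℂ) * pd i (fun y => ((χ (a y / h) : ℝ) : ℂ) * u y) x‖ ^ 2 ≤
      h ^ 2 * (2 * B ^ 2 * r + 2 * B' ^ 2 * K ^ 2 * C * massModulus C K r) := by
    calc _ ≤ ∫ x, (2 * B ^ 2 * h ^ 2 * (a x * gradSq u x) +
          2 * B' ^ 2 * K ^ 2 * C * (a x * ‖u x‖ ^ 2)) := by
          refine integral_mono_of_nonneg (.of_forall fun x => ?_)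
            ((i2.const_mul _).add (i4.const_mul _)) (.of_forall fun x =>
              mul_sum_norm_pd_truncation_le ha hapos hC haK hu hh hχ hB hB' x)
          exact mul_nonneg (hapos x) (Finset.sum_nonneg fun i _ => by positivity)
      _ = 2 * B ^ 2 * h ^ 2 * G + 2 * B' ^ 2 * K ^ 2 * C * X := by
          rw [integral_add (i2.const_mul _) (i4.const_mul _), integral_const_mul,
            integral_const_mul]
      _ ≤ 2 * B ^ 2 * h ^ 2 * r + 2 * B' ^ 2 * K ^ 2 * C * (h ^ 2 * massModulus C K r) := by
          gcongr
      _ = _ := by ring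
  have hsq : ∀ y, √(h ^ 2 * y) = h * √y := fun y => by
    rw [Real.sqrt_mul (sq_nonneg h), Real.sqrt_sq hh.le]
  rw [truncationModulus, mul_add, ← hsq, ← hsq]
  exact add_le_add (Real.sqrt_le_sqrt t1) (Real.sqrt_le_sqrt t2)

theorem tendsto_truncationModulus (B B' C K : ℝ) :
    Filter.Tendsto (truncationModulus B B' C K) (nhds 0) (nhds 0) := by
  have hc : Continuous (truncationModulus B B' C K) := by
    unfold truncationModulus massModulus
    fun_prop
  simpa [truncationModulus, massModulus] using hc.tendsto 0

end

/-- **Lemma 3.4, second part, of the paper**: for a contradiction sequence and a cutoff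
`χ` as above, the truncation `v_n = χ(a/h_n) u_n` to the region `a ≲ h_n` satisfies
`‖a^{1/2}v_n‖_{L²} + ‖a^{1/2}h_n∇v_n‖_{L²} = o(h_n)`. -/
theorem stmt_8 (d : ℕ) (hd : 1 ≤ d)
    (a : EuclideanSpace ℝ (Fin d) → ℝ) (K : ℝ)
    (haC1 : ContDiff ℝ 1 a) (habd : ∃ C, ∀ x, a x ≤ C) (hapos : ∀ x, 0 ≤ a x)
    (haK : ∀ x, ‖gradient a x‖ ≤ K * Real.sqrt (a x))
    (h : ℕ → ℝ) (u : ℕ → EuclideanSpace ℝ (Fin d) → ℂ)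
    (hhpos : ∀ n, 0 < h n) (hh0 : Tendsto h atTop (nhds 0))
    (husm : ∀ n, ContDiff ℝ (⊤ : ℕ∞) (u n)) (husupp : ∀ n, HasCompactSupport (u n))
    (hunorm : ∀ n, (∫ x, ‖u n x‖ ^ 2) = 1)
    (hf : (fun n => Real.sqrt (∫ x, ‖Ph (h n) a (u n) x‖ ^ 2)) =o[atTop] h)
    (χ : ℝ → ℝ) (hχ : ContDiff ℝ (⊤ : ℕ∞) χ) (hχsupp : HasCompactSupport χ)
    (hχ1 : ∀ z : ℝ, |z| ≤ 1 → χ z = 1) (hχ0 : ∀ z : ℝ, 2 ≤ |z| → χ z = 0) :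
    (fun n => Real.sqrt (∫ x, a x * ‖((χ (a x / h n) : ℝ) : ℂ) * u n x‖ ^ 2)
      + Real.sqrt (∫ x, a x * ∑ i : Fin d,
          ‖(h n : ℂ) * pd i (fun y => ((χ (a y / h n) : ℝ) : ℂ) * u n y) x‖ ^ 2))
    =o[atTop] h := by
  obtain ⟨C, hC⟩ := habd
  obtain ⟨B, hB⟩ := hχsupp.exists_bound_of_continuous hχ.continuous
  obtain ⟨B', hB'⟩ := hχsupp.deriv.exists_bound_of_continuous (hχ.continuous_deriv (by simp))
  have hlim := (tendsto_truncationModulus B B' C K).comp hf.tendsto_div_nhds_zero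
  have hlo := (isBigO_refl h atTop).mul_isLittleO ((isLittleO_one_iff ℝ).2 hlim)
  simp only [mul_one] at hlo
  refine IsBigO.trans_isLittleO (IsBigO.of_bound 1 (.of_forall fun n => ?_)) hlo
  have hle := truncation_norms_le haC1 hapos hC haK (husm n) (husupp n) (hunorm n) (hhpos n) hχ
    hB hB'
  rw [one_mul, Real.norm_of_nonneg (by positivity)]
  exact hle.trans (Real.le_norm_self _)

end
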